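/- Let 𝔽 be one of ℂ, ℝ, ℚ and fix an integer r ≥ 1. There is a constant K depending only on r such that the following holds. Let 0 < α ≤ 1 and 0 < δ < 1/r, and let A ∈ 𝔽^{n×n} be a symmetric matrix with ‖A‖∞ ≤ 1. Suppose there do not exist δn pairwise disjoint r-tuples (i₁,…,i_r) ∈ [n]^r such that the rows of A indexed by i₁,…,i_r are α-independent. Then there exists a symmetric matrix H ∈ 𝔽^{n×n} of rank less than r such that ‖A − H‖₁ ≤ K·(δ + α^{(6r)^{−r}})·n². -/

import Mathlib

/-- Vectors `v₁,…,v_q ∈ 𝔽ⁿ` are `ε`-independent if there do not exist linearly dependent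
vectors `v₁',…,v_q'` with `‖v₁−v₁'‖₁ + … + ‖v_q−v_q'‖₁ ≤ εn`. -/
def EpsIndependent (𝔽 : Type*) [NormedField 𝔽] {q n : ℕ} (ε : ℝ)
    (v : Fin q → Fin n → 𝔽) : Prop :=
  ¬ ∃ v' : Fin q → Fin n → 𝔽, ¬ LinearIndependent 𝔽 v' ∧
      ∑ i, ∑ j, ‖v i j - v' i j‖ ≤ ε * n

def Statement13 (𝔽 : Type) [NormedField 𝔽] : Prop :=
  ∀ r : ℕ, 1 ≤ r → ∃ K : ℝ,
    ∀ α δ : ℝ, 0 < α → α ≤ 1 → 0 < δ → δ < 1 / (r : ℝ) →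
    ∀ (n : ℕ) (A : Matrix (Fin n) (Fin n) 𝔽), A.IsSymm → (∀ i j, ‖A i j‖ ≤ 1) →
      -- there do not exist `δn` pairwise disjoint `r`-tuples of `α`-independent rows of `A`
      ¬ (∃ T : Finset (Fin r → Fin n), δ * n ≤ (T.card : ℝ) ∧
          (∀ t₁ ∈ T, ∀ t₂ ∈ T, t₁ ≠ t₂ → ∀ p q, t₁ p ≠ t₂ q) ∧
          ∀ t ∈ T, EpsIndependent 𝔽 α (fun a => A (t a))) →
      ∃ H : Matrix (Fin n) (Fin n) 𝔽, H.IsSymm ∧ H.rank < r ∧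
        ∑ i, ∑ j, ‖A i j - H i j‖ ≤ K * (δ + α ^ (((6 * (r : ℝ)) ^ r)⁻¹)) * (n : ℝ) ^ 2

section aux

open Matrix

variable {F : Type} [NormedField F]

lemma s13_dep {q n : ℕ} {ε : ℝ} {v : Fin q → Fin n → F} (h : ¬ EpsIndependent F ε v) :
    ∃ (c : Fin q → F) (j0 : Fin q), c j0 = 1 ∧ (∀ j, ‖c j‖ ≤ 1) ∧
      ∑ k, ‖∑ j, c j * v j k‖ ≤ ε * n := by
  unfold EpsIndependent at h
  rw [not_not] at h
  obtain ⟨v', hv', hd⟩ := h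
  rw [Fintype.not_linearIndependent_iff] at hv'
  obtain ⟨g, hg, i, hi⟩ := hv'
  obtain ⟨j0, -, hj0⟩ := Finset.exists_max_image Finset.univ (fun j => ‖g j‖) ⟨i, Finset.mem_univ i⟩
  have hpos : 0 < ‖g j0‖ := lt_of_lt_of_le (norm_pos_iff.2 hi) (hj0 i (Finset.mem_univ i))
  have hne : g j0 ≠ 0 := norm_pos_iff.1 hpos
  have hc1 : ∀ j, ‖g j / g j0‖ ≤ 1 := by
    intro j
    rw [norm_div, div_le_one hpos]
    exact hj0 j (Finset.mem_univ j)
  refine ⟨fun j => g j / g j0, j0, div_self hne, hc1, ?_⟩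
  refine le_trans ?_ hd
  rw [Finset.sum_comm]
  refine Finset.sum_le_sum fun k _ => ?_
  have h0 : ∑ j, g j / g j0 * v' j k = 0 := by
    have := congrFun hg k
    simp only [Finset.sum_apply, Pi.smul_apply, smul_eq_mul, Pi.zero_apply] at this
    have h2 : ∑ j, g j / g j0 * v' j k = (∑ j, g j * v' j k) / g j0 := by
      rw [Finset.sum_div]
      exact Finset.sum_congr rfl fun j _ => by ring
    rw [h2, this, zero_div]
  have h1 : ∑ j, g j / g j0 * v j k = ∑ j, g j / g j0 * (v j k - v' j k) := by
    simp only [mul_sub, Finset.sum_sub_distrib, h0, sub_zero]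
  rw [h1]
  refine (norm_sum_le _ _).trans (Finset.sum_le_sum fun j _ => ?_)
  rw [norm_mul]
  exact mul_le_of_le_one_left (norm_nonneg _) (hc1 j)

lemma s13_indep {q n : ℕ} {ε : ℝ} {v : Fin q → Fin n → F} (h : EpsIndependent F ε v)
    (c : Fin q → F) (j0 : Fin q) :
    ε * n * ‖c j0‖ ≤ ∑ k, ‖∑ j, c j * v j k‖ := by
  by_cases hc : c j0 = 0
  · rw [hc, norm_zero, mul_zero]
    positivity
  by_contra hlt
  push Not at hlt
  apply h
  refine ⟨fun j k => if j = j0 then v j k - (∑ l, c l * v l k) / c j0 else v j k, ?_, ?_⟩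
  · rw [Fintype.not_linearIndependent_iff]
    refine ⟨c, ?_, j0, hc⟩
    funext k
    simp only [Finset.sum_apply, Pi.smul_apply, smul_eq_mul, Pi.zero_apply]
    have : ∀ j, c j * (if j = j0 then v j k - (∑ l, c l * v l k) / c j0 else v j k)
        = c j * v j k - (if j = j0 then (∑ l, c l * v l k) else 0) := by
      intro j
      split_ifs with hj
      · subst hj; field_simp
      · simp
    rw [Finset.sum_congr rfl fun j _ => this j, Finset.sum_sub_distrib]
    simp
  · have : ∀ j, ∑ k, ‖v j k - (if j = j0 then v j k - (∑ l, c l * v l k) / c j0 else v j k)‖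
        = if j = j0 then (∑ k, ‖∑ l, c l * v l k‖) / ‖c j0‖ else 0 := by
      intro j
      split_ifs with hj
      · rw [Finset.sum_div]
        exact Finset.sum_congr rfl fun k _ => by rw [sub_sub_cancel, norm_div]
      · simp
    rw [Finset.sum_congr rfl fun j _ => this j]
    simp only [Finset.sum_ite_eq', Finset.mem_univ, if_true]
    rw [div_le_iff₀ (norm_pos_iff.2 hc)]
    exact hlt.le

/-- a bounded right inverse -/
lemma s13_inv (conj : F →+* F)
    (hconj : ∀ (n : ℕ) (x : Fin n → F), ‖∑ k, x k * conj (x k)‖ = ∑ k, ‖x k‖ ^ 2)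
    {q n : ℕ} (hn : 0 < n) {s : ℝ} (hs : 0 < s) (R : Matrix (Fin q) (Fin n) F)
    (hR1 : ∀ i j, ‖R i j‖ ≤ 1)
    (hR : ∀ (c : Fin q → F) (j0 : Fin q), s * n * ‖c j0‖ ≤ ∑ k, ‖∑ j, c j * R j k‖) :
    ∃ Q : Matrix (Fin n) (Fin q) F, R * Q = 1 ∧ ∀ k j, ‖Q k j‖ ≤ q / (s ^ 2 * n) := by
  have hn' : (0 : ℝ) < n := by exact_mod_cast hn
  have hcn : ∀ x, ‖conj x‖ = ‖x‖ := by
    intro x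
    have := hconj 1 (fun _ => x)
    simp only [Finset.univ_unique, Finset.sum_singleton, norm_mul] at this
    by_cases hx : x = 0
    · simp [hx]
    · have : ‖x‖ * ‖conj x‖ = ‖x‖ * ‖x‖ := by rw [this]; ring
      exact mul_left_cancel₀ (norm_ne_zero_iff.2 hx) this
  set Rc : Matrix (Fin n) (Fin q) F := fun k b => conj (R b k) with hRc
  set G := R * Rc with hG
  have key : ∀ c : Fin q → F, ‖∑ b, (c ᵥ* G) b * conj (c b)‖ = ∑ k, ‖∑ j, c j * R j k‖ ^ 2 := by
    intro c
    rw [← hconj n (fun k => ∑ j, c j * R j k)]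
    congr 1
    have e1 : ∀ b, (c ᵥ* G) b = ∑ k, (∑ j, c j * R j k) * conj (R b k) := by
      intro b
      rw [hG, ← Matrix.vecMul_vecMul]
      simp [Matrix.vecMul, dotProduct, hRc]
    simp only [e1, map_sum, map_mul]
    simp only [Finset.sum_mul (s := Finset.univ (α := Fin n))]
    rw [Finset.sum_comm]
    refine Finset.sum_congr rfl fun k _ => ?_
    rw [Finset.mul_sum]
    exact Finset.sum_congr rfl fun b _ => by ring
  have cs : ∀ c : Fin q → F, ∀ b, s ^ 2 * n * ‖c b‖ ^ 2 ≤ ∑ k, ‖∑ j, c j * R j k‖ ^ 2 := by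
    intro c b
    have h1 := hR c b
    have h2 := sq_sum_le_card_mul_sum_sq (s := (Finset.univ : Finset (Fin n)))
      (f := fun k => ‖∑ j, c j * R j k‖)
    simp only [Finset.card_univ, Fintype.card_fin] at h2
    have h3 : (s * n * ‖c b‖) ^ 2 ≤ (∑ k, ‖∑ j, c j * R j k‖) ^ 2 :=
      pow_le_pow_left₀ (by positivity) h1 2
    have h4 : (n : ℝ) * (s ^ 2 * n * ‖c b‖ ^ 2) ≤ n * ∑ k, ‖∑ j, c j * R j k‖ ^ 2 := by
      calc _ = (s * n * ‖c b‖) ^ 2 := by ring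
        _ ≤ _ := h3.trans h2
    exact le_of_mul_le_mul_left h4 hn'
  have hunit : IsUnit G := by
    rw [← Matrix.vecMul_injective_iff_isUnit]
    intro c d hcd
    have h0 : (c - d) ᵥ* G = 0 := by
      rw [Matrix.sub_vecMul]; exact sub_eq_zero.2 hcd
    have hk := key (c - d)
    rw [h0] at hk
    simp only [Pi.zero_apply, zero_mul, Finset.sum_const_zero, norm_zero] at hk
    funext b
    have := cs (c - d) b
    rw [← hk] at this
    have h5 : ‖(c - d) b‖ ^ 2 ≤ 0 := by
      by_contra hh
      push Not at hh
      have : 0 < s ^ 2 * n * ‖(c - d) b‖ ^ 2 := by positivity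
      linarith
    have h6 : ‖(c - d) b‖ = 0 := by
      have := sq_nonneg ‖(c - d) b‖
      exact pow_eq_zero_iff (two_ne_zero) |>.1 (le_antisymm h5 this)
    exact sub_eq_zero.1 (norm_eq_zero.1 h6)
  have hdet : IsUnit G.det := (Matrix.isUnit_iff_isUnit_det G).1 hunit
  have hW : ∀ j b, ‖G⁻¹ j b‖ ≤ 1 / (s ^ 2 * n) := by
    intro j b
    have e : (G⁻¹ j) ᵥ* G = Pi.single j 1 := by
      funext b
      have := congrFun (congrFun (Matrix.nonsing_inv_mul G hdet) j) b
      rw [Matrix.one_apply] at this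
      rw [Pi.single_apply]
      simp only [eq_comm (a := b)]
      rw [← this]; rfl
    have hk := key (G⁻¹ j)
    rw [e] at hk
    have hk2 : ‖G⁻¹ j j‖ = ∑ k, ‖∑ l, G⁻¹ j l * R l k‖ ^ 2 := by
      rw [← hk]
      simp [Pi.single_apply, hcn]
    have h1 := cs (G⁻¹ j) j
    have h2 := cs (G⁻¹ j) b
    rw [← hk2] at h1 h2
    have hp : 0 < s ^ 2 * n := by positivity
    generalize s ^ 2 * (n : ℝ) = p at *
    rw [le_div_iff₀ hp]
    have h3 : p * ‖G⁻¹ j j‖ ≤ 1 := by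
      by_contra hh
      push Not at hh
      have hx : 0 < ‖G⁻¹ j j‖ := by
        by_contra h7
        have : ‖G⁻¹ j j‖ = 0 := le_antisymm (not_lt.1 h7) (norm_nonneg _)
        rw [this] at hh
        linarith
      nlinarith
    have h4 : (p * ‖G⁻¹ j b‖) ^ 2 ≤ 1 := by nlinarith
    have h5 := (sq_le_one_iff₀ (by positivity)).1 h4
    linarith
  refine ⟨Rc * G⁻¹, ?_, ?_⟩
  · rw [← Matrix.mul_assoc, ← hG, Matrix.mul_nonsing_inv G hdet]
  · intro k j
    rw [Matrix.mul_apply]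
    refine (norm_sum_le _ _).trans ?_
    have : ∀ b ∈ (Finset.univ : Finset (Fin q)), ‖Rc k b * G⁻¹ b j‖ ≤ 1 / (s ^ 2 * n) := by
      intro b _
      rw [norm_mul]
      refine (mul_le_of_le_one_left (norm_nonneg _) ?_).trans (hW b j)
      rw [hRc]; simp only [hcn]; exact hR1 b k
    refine (Finset.sum_le_sum this).trans ?_
    simp [div_eq_mul_inv]

/-- rows close to combinations of `R` -/
lemma s13_row {q n : ℕ} (hn : 0 < n) {s s' : ℝ} (hs : 0 < s) (hs' : s' ≤ s / 2) (hs1 : s ≤ 1)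
    (R : Fin q → Fin n → F) (hR : EpsIndependent F s R) (x : Fin n → F) (hx : ∀ k, ‖x k‖ ≤ 1)
    (hs0 : 0 ≤ s')
    (hdep : ¬ EpsIndependent F s' (Fin.cons x R : Fin (q + 1) → Fin n → F)) :
    ∃ b : Fin q → F, ∑ k, ‖x k - ∑ j, b j * R j k‖ ≤ 2 * s' / s * n := by
  have hn' : (0 : ℝ) < n := by exact_mod_cast hn
  obtain ⟨c, j0, hc0, hc1, hd⟩ := s13_dep hdep
  simp only [Fin.sum_univ_succ, Fin.cons_zero, Fin.cons_succ] at hd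
  have hc : s / 2 ≤ ‖c 0‖ := by
    induction j0 using Fin.cases with
    | zero => rw [hc0, norm_one]; linarith
    | succ j =>
      have h1 := s13_indep hR (fun j => c j.succ) j
      simp only [hc0, norm_one, mul_one] at h1
      have h2 : ∑ k, ‖∑ j : Fin q, c j.succ * R j k‖ ≤
          ∑ k, (‖c 0 * x k + ∑ j : Fin q, c j.succ * R j k‖ + ‖c 0‖) := by
        refine Finset.sum_le_sum fun k _ => ?_
        have e : ∑ j : Fin q, c j.succ * R j k
          = (c 0 * x k + ∑ j : Fin q, c j.succ * R j k) - c 0 * x k := by ring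
        calc _ = ‖(c 0 * x k + ∑ j : Fin q, c j.succ * R j k) - c 0 * x k‖ := by rw [← e]
          _ ≤ _ := norm_sub_le _ _
          _ ≤ _ := by
            gcongr
            rw [norm_mul]
            exact mul_le_of_le_one_right (norm_nonneg _) (hx k)
      rw [Finset.sum_add_distrib] at h2
      simp only [Finset.sum_const, Finset.card_univ, Fintype.card_fin, nsmul_eq_mul] at h2
      have h3 : s * n ≤ (s' + ‖c 0‖) * n := by nlinarith
      have := le_of_mul_le_mul_right h3 hn'
      linarith
  have hpos : 0 < ‖c 0‖ := by linarith
  have hne : c 0 ≠ 0 := norm_pos_iff.1 hpos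
  refine ⟨fun j => - (c j.succ / c 0), ?_⟩
  have e : ∀ k, ‖x k - ∑ j : Fin q, -(c j.succ / c 0) * R j k‖ =
      ‖c 0 * x k + ∑ j : Fin q, c j.succ * R j k‖ / ‖c 0‖ := by
    intro k
    rw [← norm_div]
    congr 1
    rw [add_div, Finset.sum_div, mul_div_cancel_left₀ _ hne, sub_eq_add_neg,
      ← Finset.sum_neg_distrib]
    congr 1
    exact Finset.sum_congr rfl fun j _ => by ring
  rw [Finset.sum_congr rfl fun k _ => e k, ← Finset.sum_div, div_le_iff₀ hpos]
  refine hd.trans ?_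
  have : 2 * s' / s * n * (s / 2) ≤ 2 * s' / s * n * ‖c 0‖ := by gcongr
  calc s' * n = 2 * s' / s * n * (s / 2) := by field_simp
    _ ≤ _ := this

lemma s13_core (conj : F →+* F)
    (hconj : ∀ (n : ℕ) (x : Fin n → F), ‖∑ k, x k * conj (x k)‖ = ∑ k, ‖x k‖ ^ 2)
    (h2 : ‖(2 : F)‖ = 2)
    {q n : ℕ} (hn : 0 < n) {s s' : ℝ} (hs : 0 < s) (hs' : s' ≤ s / 2) (hs1 : s ≤ 1)
    (hs0 : 0 ≤ s') (A : Matrix (Fin n) (Fin n) F) (hA : A.IsSymm) (hA1 : ∀ i j, ‖A i j‖ ≤ 1)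
    (t : Fin q → Fin n) (ht : EpsIndependent F s (fun a => A (t a)))
    (hdep : ∀ u : Fin (q + 1) → Fin n, ¬ EpsIndependent F s' (fun a => A (u a))) :
    ∃ H : Matrix (Fin n) (Fin n) F, H.IsSymm ∧ H.rank ≤ q ∧
      ∑ i, ∑ j, ‖A i j - H i j‖ ≤ 2 * s' / s * (1 + 2 * q ^ 2 / s ^ 2) * n ^ 2 := by
  have hn' : (0 : ℝ) < n := by exact_mod_cast hn
  set R : Matrix (Fin q) (Fin n) F := fun a => A (t a) with hRdef
  obtain ⟨Q, hRQ, hQ⟩ := s13_inv conj hconj hn hs R (fun i j => hA1 _ _) (s13_indep ht)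
  have hrow : ∀ i, ∃ b : Fin q → F, ∑ k, ‖A i k - ∑ j, b j * R j k‖ ≤ 2 * s' / s * n := by
    intro i
    refine s13_row hn hs hs' hs1 R ht (A i) (hA1 i) hs0 ?_
    have := hdep (Fin.cons i t)
    convert this using 2
    funext a
    induction a using Fin.cases <;> simp [hRdef]
  choose B hB using hrow
  set Bm : Matrix (Fin n) (Fin q) F := B with hBm
  set D : Matrix (Fin n) (Fin n) F := A - Bm * R with hD
  have hDsum : ∑ i, ∑ k, ‖D i k‖ ≤ 2 * s' / s * n * n := by
    have : ∀ i ∈ (Finset.univ : Finset (Fin n)), ∑ k, ‖D i k‖ ≤ 2 * s' / s * n := by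
      intro i _
      have := hB i
      simpa [hD, Matrix.mul_apply] using this
    refine (Finset.sum_le_sum this).trans ?_
    simp [mul_comm]
  set X := Q * R with hX
  have hXb : ∀ k l, ‖X k l‖ ≤ q ^ 2 / (s ^ 2 * n) := by
    intro k l
    rw [hX, Matrix.mul_apply]
    refine (norm_sum_le _ _).trans ?_
    have : ∀ j ∈ (Finset.univ : Finset (Fin q)), ‖Q k j * R j l‖ ≤ q / (s ^ 2 * n) := by
      intro j _
      rw [norm_mul]
      exact (mul_le_of_le_one_right (norm_nonneg _) (hA1 _ _)).trans (hQ k j)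
    refine (Finset.sum_le_sum this).trans (le_of_eq ?_)
    simp; ring
  set N := Bmᵀ * Q with hN
  set H' := Rᵀ * N * R with hH'
  have hAH : A - H' = D + (Dᵀ - D) * X := by
    have e1 : Bm * R * X = Bm * R := by
      rw [hX, Matrix.mul_assoc, ← Matrix.mul_assoc R Q R, hRQ, Matrix.one_mul]
    have e2 : Dᵀ - D = Bm * R - Rᵀ * Bmᵀ := by
      rw [hD, Matrix.transpose_sub, hA.eq, Matrix.transpose_mul]; abel
    rw [e2, Matrix.sub_mul, e1, hX, hH', hN, hD]
    simp only [Matrix.mul_assoc]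
    abel
  have hmul : ∀ M : Matrix (Fin n) (Fin n) F,
      ∑ i, ∑ j, ‖(M * X) i j‖ ≤ (∑ i, ∑ j, ‖M i j‖) * (q ^ 2 / s ^ 2) := by
    intro M
    rw [Finset.sum_mul]
    refine Finset.sum_le_sum fun i _ => ?_
    have : ∀ j ∈ (Finset.univ : Finset (Fin n)),
        ‖(M * X) i j‖ ≤ (∑ k, ‖M i k‖) * (q ^ 2 / (s ^ 2 * n)) := by
      intro j _
      rw [Matrix.mul_apply, Finset.sum_mul]
      refine (norm_sum_le _ _).trans (Finset.sum_le_sum fun k _ => ?_)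
      rw [norm_mul]
      exact mul_le_mul_of_nonneg_left (hXb k j) (norm_nonneg _)
    refine (Finset.sum_le_sum this).trans (le_of_eq ?_)
    simp only [Finset.sum_const, Finset.card_univ, Fintype.card_fin, nsmul_eq_mul]
    field_simp
  set S := ∑ i, ∑ k, ‖D i k‖ with hS
  have hDT : ∑ i, ∑ k, ‖Dᵀ i k‖ = S := by
    rw [hS, Finset.sum_comm]; rfl
  have hDD : ∑ i, ∑ j, ‖(Dᵀ - D) i j‖ ≤ 2 * S := by
    calc _ ≤ ∑ i, ∑ j, (‖Dᵀ i j‖ + ‖D i j‖) :=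
          Finset.sum_le_sum fun i _ => Finset.sum_le_sum fun j _ => norm_sub_le _ _
      _ = 2 * S := by simp only [Finset.sum_add_distrib]; rw [hDT]; ring
  have hmain : ∑ i, ∑ j, ‖(A - H') i j‖ ≤ S * (1 + 2 * q ^ 2 / s ^ 2) := by
    rw [hAH]
    calc _ ≤ ∑ i, ∑ j, (‖D i j‖ + ‖((Dᵀ - D) * X) i j‖) :=
          Finset.sum_le_sum fun i _ => Finset.sum_le_sum fun j _ => norm_add_le _ _
      _ = S + ∑ i, ∑ j, ‖((Dᵀ - D) * X) i j‖ := by simp only [Finset.sum_add_distrib]; rfl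
      _ ≤ S + (2 * S) * (q ^ 2 / s ^ 2) := by
          gcongr
          exact (hmul _).trans (mul_le_mul_of_nonneg_right hDD (by positivity))
      _ = _ := by ring
  have h2ne : (2 : F) ≠ 0 := by
    intro h; rw [h, norm_zero] at h2; norm_num at h2
  refine ⟨(2 : F)⁻¹ • (H' + H'ᵀ), ?_, ?_, ?_⟩
  · rw [Matrix.IsSymm, Matrix.transpose_smul, Matrix.transpose_add, Matrix.transpose_transpose,
      add_comm]
  · have : (2 : F)⁻¹ • (H' + H'ᵀ) = ((2 : F)⁻¹ • (Rᵀ * (N + Nᵀ))) * R := by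
      rw [Matrix.smul_mul, hH']
      congr 1
      simp only [Matrix.transpose_mul, Matrix.transpose_transpose, Matrix.mul_add, Matrix.add_mul,
        Matrix.mul_assoc]
    rw [this]
    refine (Matrix.rank_mul_le_right _ _).trans ?_
    simpa using Matrix.rank_le_card_height R
  · have : ∀ i j, ‖A i j - ((2 : F)⁻¹ • (H' + H'ᵀ)) i j‖ ≤
        (‖(A - H') i j‖ + ‖(A - H') j i‖) / 2 := by
      intro i j
      have e : A i j - ((2 : F)⁻¹ • (H' + H'ᵀ)) i j = ((A - H') i j + (A - H') j i) / 2 := by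
        simp only [Matrix.smul_apply, Matrix.add_apply, Matrix.transpose_apply, Matrix.sub_apply,
          smul_eq_mul, hA.apply i j]
        field_simp
        ring
      rw [e, norm_div, h2]
      gcongr
      exact norm_add_le _ _
    calc _ ≤ ∑ i, ∑ j, (‖(A - H') i j‖ + ‖(A - H') j i‖) / 2 :=
          Finset.sum_le_sum fun i _ => Finset.sum_le_sum fun j _ => this i j
      _ = ∑ i, ∑ j, ‖(A - H') i j‖ := by
          simp only [← Finset.sum_div, Finset.sum_add_distrib]
          rw [Finset.sum_comm (f := fun i j => ‖(A - H') j i‖)]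
          ring
      _ ≤ S * (1 + 2 * q ^ 2 / s ^ 2) := hmain
      _ ≤ (2 * s' / s * n * n) * (1 + 2 * q ^ 2 / s ^ 2) := by gcongr
      _ = _ := by ring

lemma s13_exp {α : ℝ} (h0 : 0 < α) (h1 : α ≤ 1) {r q : ℕ} (hq : q < r) :
    α ^ (((6 * (r : ℝ)) ^ (r - (q + 1)))⁻¹) ≤ (α ^ (((6 * (r : ℝ)) ^ (r - q))⁻¹)) ^ 4 := by
  have hr : (1 : ℝ) ≤ r := by exact_mod_cast (by omega : 1 ≤ r)
  rw [← Real.rpow_mul_natCast h0.le]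
  apply Real.rpow_le_rpow_of_exponent_ge h0 h1
  have : r - q = (r - (q + 1)) + 1 := by omega
  rw [this, pow_succ, mul_inv, mul_assoc]
  apply mul_le_of_le_one_right (by positivity)
  rw [inv_mul_le_iff₀ (by positivity)]
  push_cast
  linarith

lemma s13_all (conj : F →+* F)
    (hconj : ∀ (n : ℕ) (x : Fin n → F), ‖∑ k, x k * conj (x k)‖ = ∑ k, ‖x k‖ ^ 2)
    (h2 : ‖(2 : F)‖ = 2) {r n : ℕ} (hr : 1 ≤ r) (hn : 0 < n) {α : ℝ} (h0 : 0 < α) (h1 : α ≤ 1)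
    (A : Matrix (Fin n) (Fin n) F) (hA : A.IsSymm) (hA1 : ∀ i j, ‖A i j‖ ≤ 1)
    (hdep : ∀ u : Fin r → Fin n, ¬ EpsIndependent F α (fun a => A (u a))) :
    ∃ H : Matrix (Fin n) (Fin n) F, H.IsSymm ∧ H.rank < r ∧
      ∑ i, ∑ j, ‖A i j - H i j‖ ≤
        (2 + 4 * (r : ℝ) ^ 2) * α ^ (((6 * (r : ℝ)) ^ r)⁻¹) * (n : ℝ) ^ 2 := by
  have hr' : (1 : ℝ) ≤ r := by exact_mod_cast hr
  have hn' : (0 : ℝ) < n := by exact_mod_cast hn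
  set a : ℕ → ℝ := fun q => α ^ (((6 * (r : ℝ)) ^ (r - q))⁻¹) with ha
  have ha0 : α ^ (((6 * (r : ℝ)) ^ r)⁻¹) = a 0 := by simp [ha]
  rw [ha0]
  have hapos : ∀ q, 0 < a q := fun q => Real.rpow_pos_of_pos h0 _
  have ha1 : ∀ q, a q ≤ 1 := fun q => Real.rpow_le_one h0.le h1 (by positivity)
  have hale : ∀ q, a q ≤ a 0 := by
    intro q
    apply Real.rpow_le_rpow_of_exponent_ge h0 h1
    apply inv_anti₀ (by positivity)
    exact pow_le_pow_right₀ (by linarith) (by omega)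
  have har : a r = α := by simp [ha]
  by_cases hbig : 1 / 2 ≤ a 0
  · refine ⟨0, Matrix.isSymm_zero, by rw [Matrix.rank_zero]; omega, ?_⟩
    have : ∀ i ∈ (Finset.univ : Finset (Fin n)), ∑ j, ‖A i j - (0 : Matrix (Fin n) (Fin n) F) i j‖
        ≤ n := by
      intro i _
      calc _ ≤ ∑ j : Fin n, (1 : ℝ) := Finset.sum_le_sum fun j _ => by simpa using hA1 i j
        _ = n := by simp
    refine (Finset.sum_le_sum this).trans ?_
    simp only [Finset.sum_const, Finset.card_univ, Fintype.card_fin, nsmul_eq_mul]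
    rw [← sq]
    apply le_mul_of_one_le_left (by positivity)
    nlinarith
  push Not at hbig
  obtain ⟨q, hqr, ⟨t, ht⟩, hq⟩ : ∃ q < r, (∃ t : Fin q → Fin n,
      EpsIndependent F (a q) (fun i => A (t i))) ∧
      ∀ u : Fin (q + 1) → Fin n, ¬ EpsIndependent F (a (q + 1)) (fun i => A (u i)) := by
    by_contra hcon
    push Not at hcon
    have : ∀ q ≤ r, ∃ t : Fin q → Fin n, EpsIndependent F (a q) (fun i => A (t i)) := by
      intro q
      induction q with
      | zero =>
        intro _
        refine ⟨Fin.elim0, ?_⟩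
        rintro ⟨v', hv', -⟩
        exact hv' linearIndependent_empty_type
      | succ q ih =>
        intro hq
        obtain ⟨t, ht⟩ := ih (by omega)
        exact hcon q (by omega) ⟨t, ht⟩
    obtain ⟨t, ht⟩ := this r le_rfl
    rw [har] at ht
    exact hdep t ht
  have hexp : a (q + 1) ≤ a q ^ 4 := s13_exp h0 h1 hqr
  set s := a q with hsdef
  have hsp : 0 < s := hapos q
  have hs1 : s ≤ 1 := ha1 q
  have hsh : s ≤ 1 / 2 := (hale q).trans hbig.le
  have hs' : a (q + 1) ≤ s / 2 := by
    refine hexp.trans ?_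
    have : s ^ 3 ≤ 1 / 2 := by
      have : s ^ 3 ≤ s := pow_le_of_le_one hsp.le hs1 (by norm_num)
      linarith
    calc s ^ 4 = s * s ^ 3 := by ring
      _ ≤ s * (1 / 2) := by gcongr
      _ = s / 2 := by ring
  obtain ⟨H, hH1, hH2, hH3⟩ := s13_core conj hconj h2 hn hsp hs' hs1 (hapos _).le A hA hA1 t ht hq
  refine ⟨H, hH1, by omega, hH3.trans ?_⟩
  refine mul_le_mul_of_nonneg_right ?_ (by positivity)
  have hqr' : (q : ℝ) ≤ r := by exact_mod_cast hqr.le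
  calc 2 * a (q + 1) / s * (1 + 2 * (q : ℝ) ^ 2 / s ^ 2)
      ≤ 2 * s ^ 4 / s * (1 + 2 * (r : ℝ) ^ 2 / s ^ 2) := by gcongr
    _ = (2 * s ^ 2 + 4 * (r : ℝ) ^ 2) * s := by field_simp; ring
    _ ≤ (2 * 1 + 4 * (r : ℝ) ^ 2) * a 0 := by
        have : s ^ 2 ≤ 1 := pow_le_one₀ hsp.le hs1
        have := hale q
        gcongr
    _ = _ := by ring

lemma s13_field (conj : F →+* F)
    (hconj : ∀ (n : ℕ) (x : Fin n → F), ‖∑ k, x k * conj (x k)‖ = ∑ k, ‖x k‖ ^ 2)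
    (h2 : ‖(2 : F)‖ = 2) : Statement13 F := by
  classical
  intro r hr
  refine ⟨2 + 4 * (r : ℝ) ^ 2 + 2 * r, ?_⟩
  intro α δ h0 h1 hδ _ n A hA hA1 hT
  have hr' : (1 : ℝ) ≤ r := by exact_mod_cast hr
  have hn : 0 < n := by
    rcases Nat.eq_zero_or_pos n with h | h
    · exfalso
      apply hT
      refine ⟨∅, by simp [h], by simp, by simp⟩
    · exact h
  have hn' : (0 : ℝ) < n := by exact_mod_cast hn
  let P : Finset (Fin r → Fin n) → Prop := fun T =>
    (∀ t₁ ∈ T, ∀ t₂ ∈ T, t₁ ≠ t₂ → ∀ p q, t₁ p ≠ t₂ q) ∧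
      ∀ t ∈ T, EpsIndependent F α (fun a => A (t a))
  obtain ⟨T, hTP, hmax⟩ := Finset.exists_max_image
    (Finset.univ.filter P) Finset.card ⟨∅, by simp [P]⟩
  rw [Finset.mem_filter] at hTP
  obtain ⟨-, hTd, hTi⟩ := hTP
  have hcard : (T.card : ℝ) < δ * n := by
    by_contra h
    push Not at h
    exact hT ⟨T, h, hTd, hTi⟩
  set S : Finset (Fin n) := T.biUnion (fun t => Finset.univ.image t) with hS
  have hScard : (S.card : ℝ) ≤ r * δ * n := by
    have h3 : S.card ≤ T.card * r := by
      apply Finset.card_biUnion_le_card_mul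
      intro t _
      exact Finset.card_image_le.trans (by simp)
    have h4 : (S.card : ℝ) ≤ T.card * r := by exact_mod_cast h3
    nlinarith
  have hmem : ∀ t ∈ T, ∀ p, t p ∈ S := by
    intro t ht p
    rw [hS, Finset.mem_biUnion]
    exact ⟨t, ht, Finset.mem_image_of_mem _ (Finset.mem_univ p)⟩
  have hout : ∀ u : Fin r → Fin n, (∀ p, u p ∉ S) → ¬ EpsIndependent F α (fun a => A (u a)) := by
    intro u hu hind
    have huT : u ∉ T := fun h => hu ⟨0, hr⟩ (hmem u h _)
    have := hmax (insert u T) (by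
      rw [Finset.mem_filter]
      refine ⟨Finset.mem_univ _, ?_, ?_⟩
      · intro t₁ ht₁ t₂ ht₂ hne p q heq
        rw [Finset.mem_insert] at ht₁ ht₂
        rcases ht₁ with rfl | ht₁ <;> rcases ht₂ with rfl | ht₂
        · exact hne rfl
        · exact hu p (heq ▸ hmem t₂ ht₂ q)
        · exact hu q (heq ▸ hmem t₁ ht₁ p)
        · exact hTd t₁ ht₁ t₂ ht₂ hne p q heq
      · intro t ht
        rw [Finset.mem_insert] at ht
        rcases ht with rfl | ht
        · exact hind
        · exact hTi t ht)
    rw [Finset.card_insert_of_notMem huT] at this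
    omega
  set A' : Matrix (Fin n) (Fin n) F := fun i j => if i ∈ S ∨ j ∈ S then 0 else A i j with hA'
  have hA's : A'.IsSymm := by
    ext i j
    rw [Matrix.transpose_apply]
    simp only [hA', or_comm (a := j ∈ S), hA.apply i j]
  have hA'1 : ∀ i j, ‖A' i j‖ ≤ 1 := by
    intro i j
    simp only [hA']
    split_ifs
    · simp
    · exact hA1 i j
  have hdep : ∀ u : Fin r → Fin n, ¬ EpsIndependent F α (fun a => A' (u a)) := by
    intro u
    unfold EpsIndependent
    rw [not_not]
    by_cases hu : ∀ p, u p ∉ S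
    · have h3 := hout u hu
      unfold EpsIndependent at h3
      rw [not_not] at h3
      obtain ⟨v', hv', hd⟩ := h3
      refine ⟨fun a j => if j ∈ S then 0 else v' a j, ?_, le_trans ?_ hd⟩
      · rw [Fintype.not_linearIndependent_iff] at hv' ⊢
        obtain ⟨g, hg, i, hi⟩ := hv'
        refine ⟨g, ?_, i, hi⟩
        funext k
        have := congrFun hg k
        simp only [Finset.sum_apply, Pi.smul_apply, smul_eq_mul, Pi.zero_apply] at this ⊢
        by_cases hk : k ∈ S
        · simp [hk]
        · simpa [hk] using this
      · refine Finset.sum_le_sum fun i _ => Finset.sum_le_sum fun j _ => ?_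
        simp only [hA', hu i, false_or]
        split_ifs
        · simp
        · exact le_rfl
    · push Not at hu
      obtain ⟨p, hp⟩ := hu
      refine ⟨fun a => A' (u a), ?_, ?_⟩
      · intro hli
        apply hli.ne_zero p
        funext j
        simp [hA', hp]
      · simp; positivity
  obtain ⟨H, hH1, hH2, hH3⟩ := s13_all conj hconj h2 hr hn h0 h1 A' hA's hA'1 hdep
  refine ⟨H, hH1, hH2, ?_⟩
  have hAA : ∑ i, ∑ j, ‖A i j - A' i j‖ ≤ 2 * r * δ * n ^ 2 := by
    have h3 : ∀ i j, ‖A i j - A' i j‖ ≤ (if i ∈ S then (1 : ℝ) else 0) + (if j ∈ S then 1 else 0) := by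
      intro i j
      have := hA1 i j
      by_cases hi : i ∈ S <;> by_cases hj : j ∈ S <;> simp [hA', hi, hj] <;> linarith
    calc _ ≤ ∑ i, ∑ j, ((if i ∈ S then (1 : ℝ) else 0) + (if j ∈ S then 1 else 0)) :=
          Finset.sum_le_sum fun i _ => Finset.sum_le_sum fun j _ => h3 i j
      _ = 2 * S.card * n := by
          simp only [Finset.sum_add_distrib]
          simp
          ring
      _ ≤ 2 * (r * δ * n) * n := by gcongr
      _ = _ := by ring
  have hpw : 0 ≤ α ^ (((6 * (r : ℝ)) ^ r)⁻¹) := Real.rpow_nonneg h0.le _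
  calc _ ≤ ∑ i, ∑ j, (‖A i j - A' i j‖ + ‖A' i j - H i j‖) :=
        Finset.sum_le_sum fun i _ => Finset.sum_le_sum fun j _ => norm_sub_le_norm_sub_add_norm_sub _ _ _
    _ = (∑ i, ∑ j, ‖A i j - A' i j‖) + ∑ i, ∑ j, ‖A' i j - H i j‖ := by
        simp only [Finset.sum_add_distrib]
    _ ≤ 2 * r * δ * n ^ 2 + (2 + 4 * (r : ℝ) ^ 2) * α ^ (((6 * (r : ℝ)) ^ r)⁻¹) * (n : ℝ) ^ 2 :=
        add_le_add hAA hH3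
    _ ≤ _ := by
        have e1 : 0 ≤ (2 + 4 * (r : ℝ) ^ 2) * δ * n ^ 2 := by positivity
        have e2 : 0 ≤ 2 * r * α ^ (((6 * (r : ℝ)) ^ r)⁻¹) * (n : ℝ) ^ 2 := by positivity
        linarith

end aux

theorem statement13 : Statement13 ℂ ∧ Statement13 ℝ ∧ Statement13 ℚ := by
  refine ⟨s13_field (starRingEnd ℂ) ?_ (by simp), s13_field (RingHom.id ℝ) ?_ (by simp),
    s13_field (RingHom.id ℚ) ?_ ?_⟩
  · intro n x
    simp only [Complex.mul_conj, Complex.normSq_eq_norm_sq]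
    rw [← Complex.ofReal_sum, Complex.norm_real, Real.norm_of_nonneg (by positivity)]
  · intro n x
    simp only [RingHom.id_apply]
    rw [Real.norm_of_nonneg (Finset.sum_nonneg fun i _ => mul_self_nonneg _)]
    exact Finset.sum_congr rfl fun i _ => by rw [Real.norm_eq_abs, sq_abs, sq]
  · intro n x
    simp only [RingHom.id_apply]
    rw [← Rat.norm_cast_real, Real.norm_of_nonneg (by
      exact_mod_cast Finset.sum_nonneg fun i _ => mul_self_nonneg _)]
    push_cast
    exact Finset.sum_congr rfl fun i _ => by
      rw [← Rat.norm_cast_real, Real.norm_eq_abs, sq_abs, sq]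
  · rw [← Rat.norm_cast_real]; simp
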